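/- Let φ, ψ, η be integrable on 𝕋, a ∈ ℂ, n ≥ 0, and suppose D_k[φ] ≠ 0 for 0 ≤ k ≤ n+2. Then ℋ_{n+2}[φ;ψ,η;a] / D_{n+1}[φ] = a − ∮_𝕋 ∮_𝕋 [ z₁^{−n} z₂^{−n} η(z₂) ψ(z₁) / (z₁ − z₂) ] · ( X₁₁(z₂;n+1)·X₂₁(z₁;n+2) − X₂₁(z₂;n+2)·X₁₁(z₁;n+1) ) dz₂/(2πi z₂) dz₁/(2πi z₁), where the iterated integral is taken over 𝕋×𝕋 (the diagonal z₁=z₂, where the 2×2 determinant factor vanishes, is a null set). -/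

import Mathlib

/-!
Write `m = n + 1`, let `T` be the `m × m` Toeplitz matrix of `φ`, and `S` the `(m+1) × (m+1)` one.

* The Schur complement of `T` gives `ℋ_{n+2} / D_{n+1} = a - ∑ η_{n-k} (T⁻¹)_{kj} ψ_j`
  (`det_bordered`).  Writing the Fourier coefficients of `η` and `ψ` as integrals, the double sum
  is the double integral of `z₁^{-n} z₂^{-n} η(z₂) ψ(z₁) K(z₂, z₁) / (z₁ z₂)` with the kernel
  `K(x, y) = ∑ x^k (T⁻¹)_{kj} y^{n-j}`.
* By Cramer's rule `X₁₁(·; m)` and `X₂₁(·; m+1)` are the generating polynomials of the last column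
  and (up to sign) the last row of `S⁻¹`.
* Block inversion expresses `T⁻¹` as the upper left block of `S⁻¹` minus a rank one matrix
  (`inv_castSucc`), so `y K(x, y) = L(x, y) + X₁₁(x) X₂₁(y)`, where `L` is the analogue of `K`
  for `S`.  Toeplitz matrices are persymmetric, hence `K` and `L` are symmetric in `(x, y)`.
  Exchanging `x` and `y` and subtracting yields the Christoffel–Darboux formula
  `(y - x) K(x, y) = X₁₁(x) X₂₁(y) - X₂₁(x) X₁₁(y)` (`christoffel_darboux`), which identifies the
  two integrands off the diagonal; for fixed `z₁` the diagonal is a null set.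
-/

open Complex Matrix Filter

/-- The `j`-th Fourier coefficient of a function on the unit circle:
`f_j = (1/(2πi)) ∮ f(ζ) ζ^{-j} dζ/ζ`. -/
noncomputable def fc (f : ℂ → ℂ) (j : ℤ) : ℂ :=
  (2 * (Real.pi : ℂ) * Complex.I)⁻¹ * ∮ ζ in C(0, 1), ζ ^ (-j - 1) * f ζ

/-- The `n × n` Toeplitz determinant `D_n[φ]`, with `D_0[φ] = 1`. -/
noncomputable def toeplitzDet (φ : ℂ → ℂ) (n : ℕ) : ℂ :=
  (Matrix.of fun j k : Fin n => fc φ ((j : ℤ) - (k : ℤ))).det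

/-- The semi-framed Toeplitz determinant `ℋ_n[φ;ψ,η;a]`. -/
noncomputable def semiFramedH (φ ψ η : ℂ → ℂ) (a : ℂ) (n : ℕ) : ℂ :=
  (Matrix.of fun j k : Fin n =>
    if (j : ℕ) = n - 1 then
      (if (k : ℕ) = n - 1 then a else fc η ((n : ℤ) - 2 - (k : ℤ)))
    else if (k : ℕ) = n - 1 then fc ψ (j : ℤ)
    else fc φ ((j : ℤ) - (k : ℤ))).det

/-- The `11`-entry of the solution of the Riemann–Hilbert problem for bi-orthogonal
polynomials with weight `φ`: `X₁₁(z;m) = D_m[φ]⁻¹ det` of the `(m+1)×(m+1)` matrix with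
rows of Fourier coefficients `φ_{i-j}` and last row `(1, z, …, z^m)`. -/
noncomputable def rhpX11 (φ : ℂ → ℂ) (m : ℕ) (z : ℂ) : ℂ :=
  (toeplitzDet φ m)⁻¹ * (Matrix.of fun i j : Fin (m + 1) =>
    if (i : ℕ) = m then z ^ (j : ℕ) else fc φ ((i : ℤ) - (j : ℤ))).det

/-- The `21`-entry of the solution of the Riemann–Hilbert problem for bi-orthogonal
polynomials with weight `φ`: `X₂₁(z;m) = -D_m[φ]⁻¹ det` of the `m×m` matrix with
columns of Fourier coefficients `φ_{i-j}` and last column `(z^{m-1}, …, z, 1)ᵀ`. -/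
noncomputable def rhpX21 (φ : ℂ → ℂ) (m : ℕ) (z : ℂ) : ℂ :=
  -(toeplitzDet φ m)⁻¹ * (Matrix.of fun i j : Fin m =>
    if (j : ℕ) = m - 1 then z ^ (m - 1 - (i : ℕ)) else fc φ ((i : ℤ) - (j : ℤ))).det

/-- The `m × m` Toeplitz matrix with symbol `φ`. -/
noncomputable def toep (φ : ℂ → ℂ) (m : ℕ) : Matrix (Fin m) (Fin m) ℂ :=
  Matrix.of fun j k : Fin m => fc φ ((j : ℤ) - (k : ℤ))

/-- The kernel `∑ x^k A_{kj} y^{N-1-j}` attached to an `N × N` matrix `A`. -/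
noncomputable def kern {N : ℕ} (A : Matrix (Fin N) (Fin N) ℂ) (x y : ℂ) : ℂ :=
  ∑ k : Fin N, ∑ j : Fin N, x ^ (k : ℕ) * A k j * y ^ (N - 1 - (j : ℕ))

lemma det_bordered {m : ℕ} (B : Matrix (Fin (m + 1)) (Fin (m + 1)) ℂ)
    (T : Matrix (Fin m) (Fin m) ℂ) (hT : T = B.submatrix Fin.castSucc Fin.castSucc)
    (h : T.det ≠ 0) :
    B.det = T.det * (B (Fin.last m) (Fin.last m)
      - ∑ k : Fin m, ∑ j : Fin m,
          B (Fin.last m) k.castSucc * T⁻¹ k j * B j.castSucc (Fin.last m)) := by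
  have hu : IsUnit T.det := isUnit_iff_ne_zero.mpr h
  have : Invertible T := T.invertibleOfIsUnitDet hu
  have hB : B.submatrix (finSumFinEquiv (m := m) (n := 1)) finSumFinEquiv
      = Matrix.fromBlocks T (Matrix.of fun j _ => B j.castSucc (Fin.last m))
        (Matrix.of fun _ k => B (Fin.last m) k.castSucc)
        (Matrix.of fun _ _ => B (Fin.last m) (Fin.last m)) := by
    have e1 : ∀ i : Fin m, (Fin.castAdd 1 i) = i.castSucc := fun _ => rfl
    have e2 : ∀ i : Fin 1, (Fin.natAdd m i) = Fin.last m := fun i => by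
      ext; simp
    ext i j
    rcases i with i | i <;> rcases j with j | j <;>
      simp only [submatrix_apply, finSumFinEquiv_apply_left, finSumFinEquiv_apply_right,
        fromBlocks_apply₁₁, fromBlocks_apply₁₂, fromBlocks_apply₂₁, fromBlocks_apply₂₂,
        of_apply, e1, e2, hT]
  rw [← det_submatrix_equiv_self (finSumFinEquiv (m := m) (n := 1)) B, hB, det_fromBlocks₁₁]
  congr 1
  rw [det_unique, invOf_eq_nonsing_inv]
  simp only [Matrix.sub_apply, mul_apply, of_apply, Finset.sum_mul]
  rw [Finset.sum_comm]

/-- The bottom right entry of the inverse, by Cramer's rule. -/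
lemma inv_last_last {m : ℕ} (A : Matrix (Fin (m + 1)) (Fin (m + 1)) ℂ)
    (T : Matrix (Fin m) (Fin m) ℂ) (hT : T = A.submatrix Fin.castSucc Fin.castSucc) :
    A⁻¹ (Fin.last m) (Fin.last m) = T.det / A.det := by
  rw [Matrix.inv_def, Matrix.smul_apply, adjugate_fin_succ_eq_det_submatrix, Ring.inverse_eq_inv']
  simp only [Fin.succAbove_last, Fin.val_last, ← two_mul, pow_mul, neg_one_sq, one_pow, one_mul,
    smul_eq_mul, hT]
  ring

/-- Block inversion: the inverse of the leading principal block is the leading block of the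
inverse minus a rank one matrix built from its last column and last row. -/
lemma inv_castSucc {m : ℕ} (A : Matrix (Fin (m + 1)) (Fin (m + 1)) ℂ)
    (T : Matrix (Fin m) (Fin m) ℂ) (hT : T = A.submatrix Fin.castSucc Fin.castSucc)
    (hA : A.det ≠ 0) (h : T.det ≠ 0) (i j : Fin m) :
    T⁻¹ i j = A⁻¹ i.castSucc j.castSucc
      - A.det / T.det * A⁻¹ i.castSucc (Fin.last m) * A⁻¹ (Fin.last m) j.castSucc := by
  set E : Matrix (Fin m) (Fin m) ℂ := Matrix.of fun i j => A⁻¹ i.castSucc j.castSucc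
      - A.det / T.det * A⁻¹ i.castSucc (Fin.last m) * A⁻¹ (Fin.last m) j.castSucc with hE
  suffices hTE : T * E = 1 by
    rw [inv_eq_right_inv hTE]; rfl
  have hAA : A * A⁻¹ = 1 := mul_nonsing_inv A (isUnit_iff_ne_zero.mpr hA)
  ext i j
  have h1 := congrFun (congrFun hAA i.castSucc) j.castSucc
  have h2 := congrFun (congrFun hAA i.castSucc) (Fin.last m)
  rw [mul_apply, Fin.sum_univ_castSucc] at h1 h2
  rw [one_apply_ne (Fin.castSucc_lt_last i).ne, inv_last_last A T hT] at h2
  have h3 : (1 : Matrix (Fin (m + 1)) (Fin (m + 1)) ℂ) i.castSucc j.castSucc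
      = (1 : Matrix (Fin m) (Fin m) ℂ) i j := by
    simp [one_apply]
  rw [← h3, ← h1, mul_apply]
  simp only [hE, of_apply, mul_sub, Finset.sum_sub_distrib]
  have h4 : ∑ x, T i x * (A.det / T.det * A⁻¹ x.castSucc (Fin.last m)
        * A⁻¹ (Fin.last m) j.castSucc)
      = A.det / T.det * A⁻¹ (Fin.last m) j.castSucc
        * ∑ x : Fin m, A i.castSucc x.castSucc * A⁻¹ x.castSucc (Fin.last m) := by
    rw [Finset.mul_sum]
    refine Finset.sum_congr rfl fun x _ => ?_
    rw [hT, submatrix_apply]; ring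
  rw [h4, eq_neg_of_add_eq_zero_left h2]
  have h5 : ∑ x, T i x * A⁻¹ x.castSucc j.castSucc
      = ∑ x : Fin m, A i.castSucc x.castSucc * A⁻¹ x.castSucc j.castSucc := by
    rw [hT]; rfl
  rw [h5]
  field_simp
  ring

/-- Toeplitz matrices are persymmetric, and so are their inverses. -/
lemma toep_inv_rev (φ : ℂ → ℂ) (m : ℕ) (i j : Fin m) :
    (toep φ m)⁻¹ i.rev j.rev = (toep φ m)⁻¹ j i := by
  have h : (toep φ m).submatrix Fin.revPerm Fin.revPerm = (toep φ m)ᵀ := by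
    ext i j
    simp only [submatrix_apply, transpose_apply, toep, of_apply, Fin.revPerm_apply]
    congr 1
    simp only [Fin.val_rev]
    omega
  have h2 := congrArg (·⁻¹) h
  simp only [inv_submatrix_equiv, ← transpose_nonsing_inv] at h2
  exact congrFun (congrFun h2 i) j

lemma kern_toep_symm (φ : ℂ → ℂ) (m : ℕ) (x y : ℂ) :
    kern (toep φ m)⁻¹ x y = kern (toep φ m)⁻¹ y x := by
  unfold kern
  rw [← Equiv.sum_comp Fin.revPerm]
  rw [Finset.sum_comm, ← Equiv.sum_comp Fin.revPerm]
  refine Finset.sum_congr rfl fun i _ => Finset.sum_congr rfl fun j _ => ?_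
  rw [Fin.revPerm_apply, Fin.revPerm_apply, toep_inv_rev, Fin.val_rev, Fin.val_rev]
  have h1 : m - 1 - (m - ((i : ℕ) + 1)) = i := by omega
  have h2 : m - ((j : ℕ) + 1) = m - 1 - j := by omega
  rw [h1, h2]; ring

lemma toep_castSucc (φ : ℂ → ℂ) (m : ℕ) :
    toep φ m = (toep φ (m + 1)).submatrix Fin.castSucc Fin.castSucc := by
  ext i j; simp [toep]

lemma rhpX11_eq (φ : ℂ → ℂ) (m : ℕ) (hS : toeplitzDet φ (m + 1) ≠ 0) (z : ℂ) :
    rhpX11 φ m z = toeplitzDet φ (m + 1) / toeplitzDet φ m *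
      ∑ j : Fin (m + 1), (toep φ (m + 1))⁻¹ j (Fin.last m) * z ^ (j : ℕ) := by
  have h : (Matrix.of fun i j : Fin (m + 1) =>
      if (i : ℕ) = m then z ^ (j : ℕ) else fc φ ((i : ℤ) - (j : ℤ)))
      = (toep φ (m + 1)).updateRow (Fin.last m) (fun j => z ^ (j : ℕ)) := by
    ext i j
    simp only [of_apply, updateRow_apply, Fin.ext_iff, Fin.val_last, toep]
  have hS' : (toep φ (m + 1)).det ≠ 0 := hS
  rw [rhpX11, h, ← cramer_transpose_apply, cramer_eq_adjugate_mulVec, ← adjugate_transpose,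
    Matrix.inv_def, Ring.inverse_eq_inv']
  simp only [mulVec, dotProduct, transpose_apply, Matrix.smul_apply, smul_eq_mul]
  change _ = (toep φ (m + 1)).det / _ * _
  simp only [mul_assoc, ← Finset.mul_sum]
  field_simp

lemma rhpX21_eq (φ : ℂ → ℂ) (m : ℕ) (z : ℂ) :
    rhpX21 φ (m + 1) z = -
      ∑ i : Fin (m + 1), (toep φ (m + 1))⁻¹ (Fin.last m) i * z ^ (m - (i : ℕ)) := by
  have h : (Matrix.of fun i j : Fin (m + 1) =>
      if (j : ℕ) = m + 1 - 1 then z ^ (m + 1 - 1 - (i : ℕ)) else fc φ ((i : ℤ) - (j : ℤ)))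
      = (toep φ (m + 1)).updateCol (Fin.last m) (fun i => z ^ (m - (i : ℕ))) := by
    ext i j
    simp only [of_apply, updateCol_apply, Fin.ext_iff, Fin.val_last, toep, Nat.add_sub_cancel]
  rw [rhpX21, h, ← cramer_apply, cramer_eq_adjugate_mulVec, Matrix.inv_def, Ring.inverse_eq_inv']
  simp only [mulVec, dotProduct, Matrix.smul_apply, smul_eq_mul]
  change -((toep φ (m + 1)).det)⁻¹ * _ = _
  simp only [mul_assoc, ← Finset.mul_sum]
  ring

/-- The recurrence `y K_m(x, y) = K_{m+1}(x, y) + X₁₁(x; m) X₂₁(y; m+1)`. -/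
lemma kern_succ (φ : ℂ → ℂ) (m : ℕ) (hT : toeplitzDet φ m ≠ 0)
    (hS : toeplitzDet φ (m + 1) ≠ 0) (x y : ℂ) :
    y * kern (toep φ m)⁻¹ x y
      = kern (toep φ (m + 1))⁻¹ x y + rhpX11 φ m x * rhpX21 φ (m + 1) y := by
  have hS' : (toep φ (m + 1)).det ≠ 0 := hS
  have hT' : (toep φ m).det ≠ 0 := hT
  rw [rhpX11_eq φ m hS, rhpX21_eq]
  set A := toep φ (m + 1) with hA
  set c := toeplitzDet φ (m + 1) / toeplitzDet φ m with hc
  -- The rank one correction kills the last row and the last column of `A⁻¹`.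
  set E : Matrix (Fin (m + 1)) (Fin (m + 1)) ℂ := Matrix.of fun k j =>
    A⁻¹ k j - c * A⁻¹ k (Fin.last m) * A⁻¹ (Fin.last m) j with hE
  have hcl : c * A⁻¹ (Fin.last m) (Fin.last m) = 1 := by
    rw [inv_last_last A _ (toep_castSucc φ m), hc]
    change A.det / (toep φ m).det * _ = 1
    field_simp
  have hrow : ∀ j, E (Fin.last m) j = 0 := fun j => by
    simp only [hE, of_apply, hcl]; ring
  have hcol : ∀ k, E k (Fin.last m) = 0 := fun k => by
    simp only [hE, of_apply]; linear_combination (-A⁻¹ k (Fin.last m)) * hcl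
  have hblk : ∀ k j : Fin m, E k.castSucc j.castSucc = (toep φ m)⁻¹ k j := fun k j => by
    rw [inv_castSucc A _ (toep_castSucc φ m) hS' hT']; rfl
  have h1 : y * kern (toep φ m)⁻¹ x y = kern E x y := by
    unfold kern
    simp only [Fin.sum_univ_castSucc, hrow, hcol, hblk, Finset.mul_sum, mul_zero, zero_mul,
      add_zero, Finset.sum_const_zero, Fin.val_castSucc]
    refine Finset.sum_congr rfl fun k _ => Finset.sum_congr rfl fun j _ => ?_
    have : m + 1 - 1 - (j : ℕ) = (m - 1 - j) + 1 := by omega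
    rw [this, pow_succ]; ring
  rw [h1, mul_neg, ← sub_eq_add_neg, mul_assoc, Finset.sum_mul_sum, Finset.mul_sum]
  unfold kern
  rw [← Finset.sum_sub_distrib]
  refine Finset.sum_congr rfl fun k _ => ?_
  rw [Finset.mul_sum, ← Finset.sum_sub_distrib]
  refine Finset.sum_congr rfl fun j _ => ?_
  simp only [hE, of_apply, Nat.add_sub_cancel]
  ring

/-- The Christoffel–Darboux formula for bi-orthogonal polynomials on the unit circle. -/
lemma christoffel_darboux (φ : ℂ → ℂ) (m : ℕ) (hT : toeplitzDet φ m ≠ 0)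
    (hS : toeplitzDet φ (m + 1) ≠ 0) (x y : ℂ) :
    rhpX11 φ m x * rhpX21 φ (m + 1) y - rhpX21 φ (m + 1) x * rhpX11 φ m y
      = (y - x) * kern (toep φ m)⁻¹ x y := by
  have h1 := kern_succ φ m hT hS x y
  have h2 := kern_succ φ m hT hS y x
  rw [kern_toep_symm φ m y x, kern_toep_symm φ (m + 1) y x] at h2
  linear_combination h2 - h1

lemma semiFramedH_div (φ ψ η : ℂ → ℂ) (a : ℂ) (n : ℕ) (hT : toeplitzDet φ (n + 1) ≠ 0) :
    semiFramedH φ ψ η a (n + 2) / toeplitzDet φ (n + 1)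
      = a - ∑ k : Fin (n + 1), ∑ j : Fin (n + 1),
          fc η ((n : ℤ) - k) * (toep φ (n + 1))⁻¹ k j * fc ψ j := by
  rw [semiFramedH, det_bordered (m := n + 1) _ (toep φ (n + 1)) ?_ hT]
  · change (toep φ (n + 1)).det * _ / (toep φ (n + 1)).det = _
    rw [mul_div_cancel_left₀ _ (show (toep φ (n + 1)).det ≠ 0 from hT)]
    have hne : ∀ k : Fin (n + 1), (k : ℕ) ≠ n + 1 := fun k => k.isLt.ne
    simp [hne]
  · ext i j
    have hne : ∀ k : Fin (n + 1), (k : ℕ) ≠ n + 1 := fun k => k.isLt.ne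
    simp [hne, toep]

/-- Integrals over the unit circle do not see the value of the integrand at one point. -/
lemma circleIntegral_congr_ne {f g : ℂ → ℂ} (w : ℂ)
    (h : ∀ z : ℂ, z ≠ 0 → z ≠ w → f z = g z) :
    (∮ z in C(0, 1), f z) = ∮ z in C(0, 1), g z := by
  have : (circleMap 0 1 ⁻¹' {w}).Countable :=
    (Set.countable_singleton _).preimage_circleMap 0 one_ne_zero
  refine intervalIntegral.integral_congr_ae ((this.ae_notMem _).mono fun θ hθ _ => ?_)
  change circleMap 0 1 θ ≠ w at hθ
  simp only [h _ (circleMap_ne_center one_ne_zero) hθ]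

lemma circleIntegrable_zpow_mul {f : ℂ → ℂ} (hf : CircleIntegrable f 0 1) (j : ℤ) :
    CircleIntegrable (fun z => z ^ j * f z) 0 1 := by
  refine hf.continuousOn_mul (g := fun z => z ^ j) fun z hz => ?_
  refine (continuousAt_zpow₀ z j (Or.inl ?_)).continuousWithinAt
  rintro rfl
  simp at hz

/-- Integrating a linear combination of terms `z^{-e-1} f(z)` gives the same combination of
Fourier coefficients. -/
lemma circleIntegral_sum_fc {ι : Type*} [Fintype ι] {f : ℂ → ℂ} (hf : CircleIntegrable f 0 1)
    (c : ι → ℂ) (e : ι → ℤ) :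
    (2 * (Real.pi : ℂ) * Complex.I)⁻¹ * (∮ z in C(0, 1), ∑ i, c i * (z ^ (-e i - 1) * f z))
      = ∑ i, c i * fc f (e i) := by
  rw [circleIntegral.integral_fun_sum, Finset.mul_sum]
  · refine Finset.sum_congr rfl fun i _ => ?_
    rw [circleIntegral.integral_const_mul, fc]; ring
  · intro i _
    exact (circleIntegrable_zpow_mul hf _).const_fun_smul (a := c i)

/-- Corollary 1.12 (the `ℋ` case): the semi-framed Toeplitz determinant
`ℋ_{n+2}[φ;ψ,η;a]` in terms of the X-RHP data. -/
theorem semiFramedH_eq_XRHP_integral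
    (φ ψ η : ℂ → ℂ) (hφ : CircleIntegrable φ 0 1) (hψ : CircleIntegrable ψ 0 1)
    (hη : CircleIntegrable η 0 1) (a : ℂ) (n : ℕ)
    (hD : ∀ k ≤ n + 2, toeplitzDet φ k ≠ 0) :
    semiFramedH φ ψ η a (n + 2) / toeplitzDet φ (n + 1)
      = a - (2 * (Real.pi : ℂ) * Complex.I)⁻¹ * ∮ z₁ in C(0, 1),
          ((2 * (Real.pi : ℂ) * Complex.I)⁻¹ * ∮ z₂ in C(0, 1),
            z₁ ^ (-(n : ℤ)) * z₂ ^ (-(n : ℤ)) * η z₂ * ψ z₁ / (z₁ - z₂)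
              * (rhpX11 φ (n + 1) z₂ * rhpX21 φ (n + 2) z₁
                 - rhpX21 φ (n + 2) z₂ * rhpX11 φ (n + 1) z₁) / z₂) / z₁ := by
  have hT := hD (n + 1) (by omega)
  have hS := hD (n + 2) le_rfl
  rw [semiFramedH_div φ ψ η a n hT]
  congr 1
  set M := (toep φ (n + 1))⁻¹ with hM
  have hinner : ∀ z₁ : ℂ, z₁ ≠ 0 →
      ((2 * (Real.pi : ℂ) * Complex.I)⁻¹ * ∮ z₂ in C(0, 1),
            z₁ ^ (-(n : ℤ)) * z₂ ^ (-(n : ℤ)) * η z₂ * ψ z₁ / (z₁ - z₂)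
              * (rhpX11 φ (n + 1) z₂ * rhpX21 φ (n + 2) z₁
                 - rhpX21 φ (n + 2) z₂ * rhpX11 φ (n + 1) z₁) / z₂) / z₁
      = ∑ j : Fin (n + 1), (∑ k : Fin (n + 1), fc η ((n : ℤ) - k) * M k j)
          * (z₁ ^ (-(j : ℤ) - 1) * ψ z₁) := by
    intro z₁ h₁
    have hint : (∮ z₂ in C(0, 1),
          z₁ ^ (-(n : ℤ)) * z₂ ^ (-(n : ℤ)) * η z₂ * ψ z₁ / (z₁ - z₂)
              * (rhpX11 φ (n + 1) z₂ * rhpX21 φ (n + 2) z₁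
                 - rhpX21 φ (n + 2) z₂ * rhpX11 φ (n + 1) z₁) / z₂)
        = ∮ z₂ in C(0, 1), ∑ k : Fin (n + 1),
            (∑ j : Fin (n + 1), M k j * (z₁ ^ (-(j : ℤ)) * ψ z₁))
              * (z₂ ^ (-((n : ℤ) - k) - 1) * η z₂) := by
      refine circleIntegral_congr_ne z₁ fun z₂ h₂ hne => ?_
      have hsub : z₁ - z₂ ≠ 0 := sub_ne_zero.mpr hne.symm
      rw [christoffel_darboux φ (n + 1) hT hS z₂ z₁, kern]
      have e0 : ∀ X : ℂ, z₁ ^ (-(n : ℤ)) * z₂ ^ (-(n : ℤ)) * η z₂ * ψ z₁ / (z₁ - z₂)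
          * ((z₁ - z₂) * X) / z₂
          = (z₁ ^ (-(n : ℤ)) * z₂ ^ (-(n : ℤ)) * η z₂ * ψ z₁ / z₂) * X := fun X => by
        field_simp
      rw [e0, Finset.mul_sum]
      refine Finset.sum_congr rfl fun k _ => ?_
      rw [Finset.mul_sum, Finset.sum_mul]
      refine Finset.sum_congr rfl fun j _ => ?_
      have e1 : z₁ ^ (-(j : ℤ)) = z₁ ^ (-(n : ℤ)) * z₁ ^ (n + 1 - 1 - (j : ℕ)) := by
        rw [← zpow_natCast, ← zpow_add₀ h₁]
        congr 1
        have := j.isLt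
        omega
      have e2 : z₂ ^ (-((n : ℤ) - k) - 1) = z₂ ^ (-(n : ℤ)) * z₂ ^ (k : ℕ) / z₂ := by
        rw [zpow_sub_one₀ h₂, ← zpow_natCast z₂ k, ← zpow_add₀ h₂, div_eq_mul_inv]
        congr 2
        ring
      rw [e1, e2]
      ring
    rw [hint, circleIntegral_sum_fc hη, Finset.sum_div]
    simp only [Finset.sum_mul, Finset.sum_div]
    rw [Finset.sum_comm]
    refine Finset.sum_congr rfl fun j _ => Finset.sum_congr rfl fun k _ => ?_
    rw [zpow_sub_one₀ h₁]
    ring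
  -- The exceptional point `0` does not lie on the circle.
  rw [circleIntegral_congr_ne 0 fun z h _ => hinner z h, circleIntegral_sum_fc hψ,
    Finset.sum_comm]
  refine Finset.sum_congr rfl fun j _ => ?_
  rw [Finset.sum_mul]
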